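/- arXiv:2403.05836 — 7 statements merged into one kernel-verified Lean document; each statement's English description precedes it below -/
import Mathlib

section
/- Let τ₁ be the topology on the bicyclic monoid C(p,q) generated by taking, as a neighbourhood base at each point q^i p^j, the family of sets U_n(q^i p^j) = {q^i p^j} ∪ {q^s p^t : s ≥ n and t ≥ n} for n ∈ ℕ. Then (C(p,q), τ₁) is a non-discrete T₁ topological inverse semigroup, i.e., τ₁ is a non-discrete T₁ topology for which multiplication is jointly continuous and inversion is continuous. -/
/-- The bicyclic monoid `C(p,q)` modeled on `ℕ × ℕ`, where `(k, l)` represents `q^k p^l`: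
`(k,l)·(m,n) = (k + (m ∸ l), n + (l ∸ m))`. -/
def bmul (a b : ℕ × ℕ) : ℕ × ℕ := (a.1 + (b.1 - a.2), b.2 + (a.2 - b.1))

/-- Inversion on the bicyclic monoid: `(q^k p^l)⁻¹ = q^l p^k`. -/
def binv (a : ℕ × ℕ) : ℕ × ℕ := (a.2, a.1)

/-- `U_n(q^i p^j) = {q^i p^j} ∪ {q^s p^t : s ≥ n, t ≥ n}`. -/
def U1 (n : ℕ) (x : ℕ × ℕ) : Set (ℕ × ℕ) := {x} ∪ {y | n ≤ y.1 ∧ n ≤ y.2}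

/-- The topology `τ₁` on the bicyclic monoid generated by the sets `U_n(q^i p^j)`
as a neighbourhood base at each point `q^i p^j`. -/
def tau1 : TopologicalSpace (ℕ × ℕ) :=
  TopologicalSpace.generateFrom {S | ∃ x : ℕ × ℕ, ∃ n : ℕ, S = U1 n x}

/-!
For the product order on `ℕ × ℕ`, the neighbourhood filter of `x` in `τ₁` is `atTop ⊔ pure x`: up
to the point itself, all points have the same neighbourhoods. In a space with
`𝓝 x = l ⊔ pure x` for one nontrivial filter `l` finer than the cofinite filter, the topology is
non-discrete and `T₁`, and continuity reduces to convergence along `l`. For the bicyclic monoid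
this amounts to inversion, both translations, and multiplication of two variables all tending to
infinity, which follows from `b - (a.2, 0) ≤ bmul a b` and `(a.1, b.2) ≤ bmul a b`.
-/

open Filter Topology

theorem disjoint_pure_of_le_cofinite {α : Type*} {f : Filter α} (hf : f ≤ cofinite) (x : α) :
    Disjoint f (pure x) :=
  (disjoint_cofinite_left.2 ⟨{x}, mem_pure.2 rfl, Set.finite_singleton x⟩).mono_left hf

section NhdsEqSupPure

variable {X Y Z : Type*} [TopologicalSpace X] [TopologicalSpace Y] [TopologicalSpace Z]
  {k : Filter X} {l : Filter Y} {m : Filter Z}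

theorem not_discreteTopology_of_nhds_eq_sup_pure [k.NeBot] (hX : ∀ x, 𝓝 x = k ⊔ pure x)
    (hk : k ≤ cofinite) : ¬ DiscreteTopology X := by
  intro _
  obtain ⟨x⟩ : Nonempty X := k.nonempty_of_neBot
  have le_pure : k ≤ pure x := by
    rw [← nhds_discrete X, hX x]
    exact le_sup_left
  exact NeBot.ne ‹_› ((disjoint_pure_of_le_cofinite hk x).eq_bot_of_le le_pure)

theorem t1Space_of_nhds_eq_sup_pure (hX : ∀ x, 𝓝 x = k ⊔ pure x) (hk : k ≤ cofinite) :
    T1Space X := by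
  refine t1Space_iff_disjoint_nhds_pure.2 fun x y hxy ↦ ?_
  rw [hX x, disjoint_sup_left]
  exact ⟨disjoint_pure_of_le_cofinite hk y, disjoint_pure_pure.2 hxy⟩

theorem continuous_of_nhds_eq_sup_pure {f : X → Y} (hX : ∀ x, 𝓝 x = k ⊔ pure x)
    (hY : ∀ y, 𝓝 y = l ⊔ pure y) (hf : Tendsto f k l) : Continuous f := by
  refine continuous_iff_continuousAt.2 fun x ↦ ?_
  rw [ContinuousAt, hX, hY]
  exact hf.sup_sup (tendsto_pure_pure f x)

theorem continuous_uncurry_of_nhds_eq_sup_pure {f : X → Y → Z} (hX : ∀ x, 𝓝 x = k ⊔ pure x)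
    (hY : ∀ y, 𝓝 y = l ⊔ pure y) (hZ : ∀ z, 𝓝 z = m ⊔ pure z)
    (hf : Tendsto (Function.uncurry f) (k ×ˢ l) m) (hf_left : ∀ x, Tendsto (f x) l m)
    (hf_right : ∀ y, Tendsto (f · y) k m) : Continuous (Function.uncurry f) := by
  refine continuous_iff_continuousAt.2 fun ⟨x, y⟩ ↦ ?_
  rw [ContinuousAt, nhds_prod_eq, hX, hY, hZ, sup_prod, prod_sup, prod_sup, prod_pure, pure_prod,
    pure_prod, map_pure]
  refine .sup (.sup ?_ ?_) (.sup ?_ ?_)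
  · exact hf.mono_right le_sup_left
  · exact tendsto_map'_iff.2 ((hf_right y).mono_right le_sup_left)
  · exact tendsto_map'_iff.2 ((hf_left x).mono_right le_sup_left)
  · exact (tendsto_pure_pure _ _).mono_right le_sup_right

end NhdsEqSupPure

theorem hasBasis_atTop_sup_pure_U1 (x : ℕ × ℕ) :
    (atTop ⊔ pure x).HasBasis (fun _ ↦ True) (U1 · x) := by
  have atTop_basis_quadrants :
      (atTop : Filter (ℕ × ℕ)).HasBasis (fun _ ↦ True) fun n : ℕ ↦ Set.Ici n ×ˢ Set.Ici n := by
    rw [← prod_atTop_atTop_eq]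
    exact atTop_basis.prod_self
  exact (atTop_basis_quadrants.sup_pure x).congr (fun _ ↦ Iff.rfl) fun _ _ ↦ Set.union_comm _ _

theorem isOpen_U1 (n : ℕ) (x : ℕ × ℕ) : IsOpen[tau1] (U1 n x) :=
  TopologicalSpace.isOpen_generateFrom_of_mem ⟨x, n, rfl⟩

theorem nhds_tau1 (x : ℕ × ℕ) : @nhds _ tau1 x = atTop ⊔ pure x := by
  let := tau1
  refine le_antisymm ?_ (sup_le ?_ (pure_le_nhds x))
  · exact (hasBasis_atTop_sup_pure_U1 x).ge_iff.2 fun n _ ↦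
      (isOpen_U1 n x).mem_nhds (Set.mem_union_left _ rfl)
  · refine TopologicalSpace.tendsto_nhds_generateFrom_iff.2 ?_
    rintro _ ⟨y, n, rfl⟩ -
    exact le_sup_left (a := atTop) ((hasBasis_atTop_sup_pure_U1 y).mem_of_mem trivial)

theorem tendsto_binv_atTop : Tendsto binv atTop atTop :=
  (OrderIso.prodComm : ℕ × ℕ ≃o ℕ × ℕ).tendsto_atTop

theorem binv_bmul (a b : ℕ × ℕ) : binv (bmul a b) = bmul (binv b) (binv a) := rfl

theorem sub_le_bmul (a b : ℕ × ℕ) : b - (a.2, 0) ≤ bmul a b :=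
  ⟨Nat.le_add_left _ _, Nat.le_add_right _ _⟩

theorem mk_fst_snd_le_bmul (a b : ℕ × ℕ) : (a.1, b.2) ≤ bmul a b :=
  ⟨Nat.le_add_right _ _, Nat.le_add_right _ _⟩

theorem tendsto_bmul_left_atTop (a : ℕ × ℕ) : Tendsto (bmul a) atTop atTop := by
  refine tendsto_atTop_mono (sub_le_bmul a) (tendsto_atTop.2 fun c ↦ ?_)
  filter_upwards [eventually_ge_atTop (c + (a.2, 0))] with b hb
  exact le_tsub_of_add_le_right hb

theorem tendsto_bmul_right_atTop (b : ℕ × ℕ) : Tendsto (bmul · b) atTop atTop :=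
  (tendsto_binv_atTop.comp ((tendsto_bmul_left_atTop (binv b)).comp tendsto_binv_atTop)).congr
    fun a ↦ binv_bmul (binv b) (binv a)

theorem tendsto_uncurry_bmul_atTop :
    Tendsto (Function.uncurry bmul) (atTop ×ˢ atTop) atTop := by
  refine tendsto_atTop_mono (fun p ↦ mk_fst_snd_le_bmul p.1 p.2) ?_
  rw [← prod_atTop_atTop_eq (α := ℕ) (β := ℕ)]
  exact tendsto_fst.prodMap tendsto_snd

/-- Proposition 1: `(C(p,q), τ₁)` is a non-discrete `T₁` topological inverse semigroup:
`τ₁` is non-discrete, `T₁`, multiplication is jointly continuous and inversion is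
continuous. -/
theorem stmt2 :
    tau1 ≠ ⊥ ∧
    @T1Space (ℕ × ℕ) tau1 ∧
    @Continuous ((ℕ × ℕ) × (ℕ × ℕ)) (ℕ × ℕ)
      (@instTopologicalSpaceProd (ℕ × ℕ) (ℕ × ℕ) tau1 tau1) tau1
      (fun p => bmul p.1 p.2) ∧
    @Continuous (ℕ × ℕ) (ℕ × ℕ) tau1 tau1 binv := by
  let := tau1
  have atTop_le : (atTop : Filter (ℕ × ℕ)) ≤ cofinite := atTop_le_cofinite
  refine ⟨fun h ↦ not_discreteTopology_of_nhds_eq_sup_pure nhds_tau1 atTop_le ⟨h⟩,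
    t1Space_of_nhds_eq_sup_pure nhds_tau1 atTop_le, ?_, ?_⟩
  · exact continuous_uncurry_of_nhds_eq_sup_pure nhds_tau1 nhds_tau1 nhds_tau1
      tendsto_uncurry_bmul_atTop tendsto_bmul_left_atTop tendsto_bmul_right_atTop
  · exact continuous_of_nhds_eq_sup_pure nhds_tau1 nhds_tau1 tendsto_binv_atTop
end

section
/- Let τ₂ be the topology on the bicyclic monoid C(p,q) generated by taking, as a neighbourhood base at each point q^i p^j, the family of sets O_n(q^i p^j) = {q^i p^j} ∪ (↓≼ q^{i+n} p^{j+n} \ {q^{i+n} p^{j+n}}) for n ∈ ℕ. Then (C(p,q), τ₂) is a non-discrete locally compact T₁ topological inverse semigroup, i.e., τ₂ is a non-discrete T₁ locally compact topology for which multiplication is jointly continuous and inversion is continuous. -/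
/-- The natural partial order on the bicyclic monoid: `x ≼ y` iff `x = y·e`
for some idempotent `e`. -/
def bLe (x y : ℕ × ℕ) : Prop := ∃ e : ℕ × ℕ, bmul e e = e ∧ x = bmul y e

/-- `↓≼ x`, the down-set of `x` with respect to the natural partial order. -/
def bDown (x : ℕ × ℕ) : Set (ℕ × ℕ) := {y | bLe y x}

/-- `O_n(q^i p^j) = {q^i p^j} ∪ (↓≼ q^{i+n} p^{j+n} \ {q^{i+n} p^{j+n}})`. -/
def O2 (n : ℕ) (x : ℕ × ℕ) : Set (ℕ × ℕ) :=
  {x} ∪ (bDown (x.1 + n, x.2 + n) \ {(x.1 + n, x.2 + n)})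

/-- The topology `τ₂` on the bicyclic monoid generated by the sets `O_n(q^i p^j)`
as a neighbourhood base at each point `q^i p^j`. -/
def tau2 : TopologicalSpace (ℕ × ℕ) :=
  TopologicalSpace.generateFrom {S | ∃ x : ℕ × ℕ, ∃ n : ℕ, S = O2 n x}

/-!
In additive notation on `ℕ × ℕ` the elements below `x` are the diagonal translates `x + (k, k)`, so
`O2 n x` consists of `x` and the tail `x + (k, k)`, `k > n`, of a sequence. Each such set is a
neighbourhood of all its points, hence these sets are a basis, and each is compact because it is a
convergent sequence together with its limit. Inversion commutes with diagonal translation, and a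
product of diagonal translates of `x` and `y` is a diagonal translate of the product of `x` and `y`,
by an amount that is large as soon as one of the two translations is.
-/

open Filter Topology TopologicalSpace

theorem bmul_self_eq_self_iff {e : ℕ × ℕ} : bmul e e = e ↔ e.1 = e.2 := by
  simp only [bmul, Prod.ext_iff]
  omega

theorem bLe_iff_exists_eq_add_diag {x y : ℕ × ℕ} : bLe y x ↔ ∃ k, y = x + (k, k) := by
  simp only [bLe, bmul_self_eq_self_iff]
  simp only [bmul, Prod.ext_iff, Prod.fst_add, Prod.snd_add]
  constructor
  · rintro ⟨e, he, hy⟩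
    exact ⟨e.1 - x.2, by omega⟩
  · rintro ⟨k, hy⟩
    exact ⟨(x.2 + k, x.2 + k), rfl, by omega⟩

theorem binv_add_diag (x : ℕ × ℕ) (k : ℕ) : binv (x + (k, k)) = binv x + (k, k) :=
  rfl

-- The product of `x` and `y` is `(x.1 - x.2 + M, y.2 - y.1 + M)` over `ℤ`, where
-- `M = max x.2 y.1`, and only `M` changes when `x` and `y` are translated diagonally.
theorem bmul_add_diag (x y : ℕ × ℕ) (s t : ℕ) :
    bmul (x + (s, s)) (y + (t, t)) =
      bmul x y +
        (max (x.2 + s) (y.1 + t) - max x.2 y.1, max (x.2 + s) (y.1 + t) - max x.2 y.1) := by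
  simp only [bmul, Prod.ext_iff, Prod.fst_add, Prod.snd_add]
  omega

section Neighbourhoods

variable {m n : ℕ} {x y : ℕ × ℕ}

theorem mem_O2_iff : y ∈ O2 n x ↔ ∃ k, (k = 0 ∨ n < k) ∧ y = x + (k, k) := by
  simp only [O2, bDown, Set.mem_union, Set.mem_singleton_iff, Set.mem_sdiff, Set.mem_ofPred_eq,
    bLe_iff_exists_eq_add_diag, Prod.ext_iff, Prod.fst_add, Prod.snd_add]
  constructor
  · rintro (hy | ⟨⟨k, hy⟩, hne⟩)
    · exact ⟨0, by omega⟩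
    · exact ⟨n + k, by omega⟩
  · rintro ⟨k, rfl | hk, hy⟩
    · exact Or.inl hy
    · exact Or.inr ⟨⟨k - n, by omega⟩, by omega⟩

theorem add_diag_mem_O2 {k : ℕ} (hk : n < k) : x + (k, k) ∈ O2 n x :=
  mem_O2_iff.2 ⟨k, Or.inr hk, rfl⟩

theorem self_mem_O2 : x ∈ O2 n x :=
  Or.inl rfl

theorem O2_eq_insert_range (n : ℕ) (x : ℕ × ℕ) :
    O2 n x = insert x (Set.range fun k ↦ x + (k + (n + 1), k + (n + 1))) := by
  ext y
  rw [mem_O2_iff, Set.mem_insert_iff, Set.mem_range]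
  constructor
  · rintro ⟨k, rfl | hk, rfl⟩
    · exact Or.inl rfl
    · exact Or.inr ⟨k - (n + 1), by rw [Nat.sub_add_cancel hk]⟩
  · rintro (rfl | ⟨k, rfl⟩)
    · exact ⟨0, Or.inl rfl, rfl⟩
    · exact ⟨k + (n + 1), by omega, rfl⟩

theorem O2_subset_O2 (hmn : m ≤ n) (hy : y ∈ O2 m x) : O2 n y ⊆ O2 m x := by
  obtain ⟨k, hk, rfl⟩ := mem_O2_iff.1 hy
  intro z hz
  obtain ⟨l, hl, rfl⟩ := mem_O2_iff.1 hz
  exact mem_O2_iff.2 ⟨k + l, by omega, add_assoc x (k, k) (l, l)⟩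

theorem binv_mem_O2 (hy : y ∈ O2 n x) : binv y ∈ O2 n (binv x) := by
  obtain ⟨k, hk, rfl⟩ := mem_O2_iff.1 hy
  exact mem_O2_iff.2 ⟨k, hk, binv_add_diag x k⟩

theorem bmul_mem_O2 {u v : ℕ × ℕ} (hu : u ∈ O2 (n + max x.2 y.1) x)
    (hv : v ∈ O2 (n + max x.2 y.1) y) : bmul u v ∈ O2 n (bmul x y) := by
  obtain ⟨s, hs, rfl⟩ := mem_O2_iff.1 hu
  obtain ⟨t, ht, rfl⟩ := mem_O2_iff.1 hv
  exact mem_O2_iff.2 ⟨_, by omega, bmul_add_diag x y s t⟩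

end Neighbourhoods

section Topology

-- On `ℕ × ℕ` this takes precedence over the (discrete) product topology.
attribute [local instance] tau2

theorem isTopologicalBasis_O2 :
    IsTopologicalBasis {S : Set (ℕ × ℕ) | ∃ x : ℕ × ℕ, ∃ n : ℕ, S = O2 n x} where
  exists_subset_inter := by
    rintro _ ⟨x, m, rfl⟩ _ ⟨y, n, rfl⟩ z ⟨hzx, hzy⟩
    exact ⟨O2 (max m n) z, ⟨z, _, rfl⟩, self_mem_O2,
      Set.subset_inter (O2_subset_O2 (le_max_left m n) hzx) (O2_subset_O2 (le_max_right m n) hzy)⟩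
  sUnion_eq := Set.eq_univ_of_forall fun x ↦ ⟨O2 0 x, ⟨x, 0, rfl⟩, self_mem_O2⟩
  eq_generateFrom := rfl

theorem isOpen_O2 (n : ℕ) (x : ℕ × ℕ) : IsOpen (O2 n x) :=
  isTopologicalBasis_O2.isOpen ⟨x, n, rfl⟩

theorem nhds_hasBasis_O2 (x : ℕ × ℕ) : (𝓝 x).HasBasis (fun _ ↦ True) fun n ↦ O2 n x := by
  refine isTopologicalBasis_O2.nhds_hasBasis.to_hasBasis ?_ ?_
  · rintro _ ⟨⟨y, n, rfl⟩, hx⟩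
    exact ⟨n, trivial, O2_subset_O2 le_rfl hx⟩
  · exact fun n _ ↦ ⟨O2 n x, ⟨⟨x, n, rfl⟩, self_mem_O2⟩, subset_rfl⟩

theorem tendsto_add_diag_nhds (x : ℕ × ℕ) : Tendsto (fun k : ℕ ↦ x + (k, k)) atTop (𝓝 x) :=
  (nhds_hasBasis_O2 x).tendsto_right_iff.2 fun n _ ↦
    (eventually_gt_atTop n).mono fun _ ↦ add_diag_mem_O2

theorem isCompact_O2 (n : ℕ) (x : ℕ × ℕ) : IsCompact (O2 n x) := by
  rw [O2_eq_insert_range]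
  exact ((tendsto_add_diag_nhds x).comp (tendsto_add_atTop_nat (n + 1))).isCompact_insert_range

theorem not_isOpen_singleton_tau2 (x : ℕ × ℕ) : ¬ IsOpen {x} := by
  intro hx
  obtain ⟨n, -, hn⟩ := (nhds_hasBasis_O2 x).mem_iff.1 (hx.mem_nhds rfl)
  have hshift : x + (n + 1, n + 1) = x := hn (add_diag_mem_O2 n.lt_succ_self)
  simp at hshift

theorem tau2_ne_bot : tau2 ≠ ⊥ := fun h ↦
  have : DiscreteTopology (ℕ × ℕ) := ⟨h⟩
  not_isOpen_singleton_tau2 0 (isOpen_discrete _)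

theorem t1Space_tau2 : T1Space (ℕ × ℕ) := by
  refine t1Space_iff_exists_open.2 fun x y hxy ↦ ⟨O2 y.1 x, isOpen_O2 _ _, self_mem_O2, fun hy ↦ ?_⟩
  obtain ⟨k, rfl | hk, hyk⟩ := mem_O2_iff.1 hy
  · exact hxy hyk.symm
  · have hfst : y.1 = x.1 + k := congrArg Prod.fst hyk
    omega

theorem locallyCompactSpace_tau2 : LocallyCompactSpace (ℕ × ℕ) :=
  .of_hasBasis nhds_hasBasis_O2 fun x n _ ↦ isCompact_O2 n x

theorem continuous_bmul : Continuous fun p : (ℕ × ℕ) × (ℕ × ℕ) ↦ bmul p.1 p.2 := by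
  refine continuous_iff_continuousAt.2 fun ⟨x, y⟩ ↦ ?_
  refine (((nhds_hasBasis_O2 x).prod_nhds (nhds_hasBasis_O2 y)).tendsto_iff
    (nhds_hasBasis_O2 (bmul x y))).2 fun n _ ↦ ?_
  exact ⟨(n + max x.2 y.1, n + max x.2 y.1), ⟨trivial, trivial⟩,
    fun _ hp ↦ bmul_mem_O2 hp.1 hp.2⟩

theorem continuous_binv : Continuous binv :=
  continuous_iff_continuousAt.2 fun x ↦
    ((nhds_hasBasis_O2 x).tendsto_iff (nhds_hasBasis_O2 (binv x))).2 fun n _ ↦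
      ⟨n, trivial, fun _ ↦ binv_mem_O2⟩

end Topology

/-- Proposition 2: `(C(p,q), τ₂)` is a non-discrete locally compact `T₁` topological
inverse semigroup: `τ₂` is non-discrete, `T₁`, locally compact, multiplication is jointly
continuous and inversion is continuous. -/
theorem stmt4 :
    tau2 ≠ ⊥ ∧
    @T1Space (ℕ × ℕ) tau2 ∧
    @LocallyCompactSpace (ℕ × ℕ) tau2 ∧
    @Continuous ((ℕ × ℕ) × (ℕ × ℕ)) (ℕ × ℕ)
      (@instTopologicalSpaceProd (ℕ × ℕ) (ℕ × ℕ) tau2 tau2) tau2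
      (fun p => bmul p.1 p.2) ∧
    @Continuous (ℕ × ℕ) (ℕ × ℕ) tau2 tau2 binv :=
  ⟨tau2_ne_bot, t1Space_tau2, locallyCompactSpace_tau2, continuous_bmul, continuous_binv⟩
end

section
/- Let τ_c be the topology on the bicyclic monoid C(p,q) generated by taking, as a neighbourhood base at each point q^i p^j, the family of sets W_n(q^i p^j) = {q^i p^j} ∪ (C(p,q) \ C_n) for n ∈ ℕ, where C_n = {q^s p^t : s ≤ n and t ≤ n}. Then τ_c is a compact T₁ topology on C(p,q) for which all left translations x ↦ a·x, all right translations x ↦ x·a, and the inversion x ↦ x^{-1} are continuous. -/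
/-- `C_n = {q^s p^t : s ≤ n, t ≤ n}`. -/
def Cset (n : ℕ) : Set (ℕ × ℕ) := {y | y.1 ≤ n ∧ y.2 ≤ n}

/-- `W_n(q^i p^j) = {q^i p^j} ∪ (C(p,q) \ C_n)`. -/
def Wc (n : ℕ) (x : ℕ × ℕ) : Set (ℕ × ℕ) := {x} ∪ (Set.univ \ Cset n)

/-- The topology `τ_c` on the bicyclic monoid generated by the sets `W_n(q^i p^j)`
as a neighbourhood base at each point `q^i p^j`. -/
def tauc : TopologicalSpace (ℕ × ℕ) :=
  TopologicalSpace.generateFrom {S | ∃ x : ℕ × ℕ, ∃ n : ℕ, S = Wc n x}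

/-!
Each `Cset n` is finite and every point lies in some `Cset n`, so `τ_c` is nothing but the cofinite
topology: it is `T₁`, hence finer than the cofinite topology, and its generators are cofinite. The
cofinite topology is compact, and a map with finite fibres is continuous for it. Inversion is a
bijection, and a fibre of a translation by `a` is finite because `x ≤ a · x + a⁻¹` and
`x ≤ x · a + a⁻¹` coordinatewise.
-/

open Filter Set Topology

section Cofinite

variable {X Y : Type*}

theorem compactSpace_cofinite : @CompactSpace X .cofinite :=
  letI : TopologicalSpace X := .cofinite
  (WithTopology.ofTopology_surjective (.cofinite : TopologicalSpace X)).compactSpace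
    (WithTopology.continuous_ofTopology _)

theorem le_cofinite_of_t1Space [t : TopologicalSpace X] [T1Space X] : t ≤ .cofinite := by
  intro s hs
  rcases s.eq_empty_or_nonempty with rfl | hne
  · exact isOpen_empty
  · exact isClosed_compl_iff.mp (hs hne).isClosed

theorem continuous_cofinite_of_tendsto {f : X → Y} (hf : Tendsto f cofinite cofinite) :
    @Continuous X Y .cofinite .cofinite f := by
  refine @Continuous.mk X Y .cofinite .cofinite f fun s hs hne => ?_
  exact hf (hs (nonempty_of_nonempty_preimage hne))

theorem tendsto_cofinite_of_forall_le [Preorder X] [LocallyFiniteOrderBot X] {f : X → Y}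
    (g : Y → X) (hg : ∀ x, x ≤ g (f x)) : Tendsto f cofinite cofinite := by
  refine Tendsto.cofinite_of_finite_preimage_singleton fun y => (finite_Iic (g y)).subset ?_
  rintro x rfl
  exact hg x

end Cofinite

section Bicyclic

variable (a x : ℕ × ℕ)

theorem le_bmul_left_add_binv : x ≤ bmul a x + binv a := by
  simp only [bmul, binv, Prod.le_def, Prod.fst_add, Prod.snd_add]
  omega

theorem le_bmul_right_add_binv : x ≤ bmul x a + binv a := by
  simp only [bmul, binv, Prod.le_def, Prod.fst_add, Prod.snd_add]
  omega

theorem tendsto_bmul_left_cofinite : Tendsto (fun x => bmul a x) cofinite cofinite :=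
  tendsto_cofinite_of_forall_le (· + binv a) (le_bmul_left_add_binv a)

theorem tendsto_bmul_right_cofinite : Tendsto (fun x => bmul x a) cofinite cofinite :=
  tendsto_cofinite_of_forall_le (· + binv a) (le_bmul_right_add_binv a)

theorem binv_injective : Function.Injective binv :=
  Prod.swap_injective

end Bicyclic

section Tauc

variable (n : ℕ) (x : ℕ × ℕ)

theorem finite_Cset : (Cset n).Finite :=
  finite_Iic (n, n)

theorem finite_compl_Wc : (Wc n x)ᶜ.Finite := by
  refine (finite_Cset n).subset (compl_subset_comm.mp ?_)
  rw [Wc, ← compl_eq_univ_sdiff]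
  exact subset_union_right

theorem isOpen_Wc : IsOpen[tauc] (Wc n x) :=
  TopologicalSpace.isOpen_generateFrom_of_mem ⟨x, n, rfl⟩

theorem t1Space_tauc : @T1Space (ℕ × ℕ) tauc := by
  let := tauc
  refine t1Space_iff_exists_open.mpr fun x y hxy => ?_
  have hy : y ∈ Cset (max y.1 y.2) := ⟨le_max_left _ _, le_max_right _ _⟩
  refine ⟨Wc (max y.1 y.2) x, isOpen_Wc _ x, Or.inl rfl, ?_⟩
  rintro (hyx | hy')
  · exact hxy hyx.symm
  · exact hy'.2 hy

theorem tauc_eq_cofinite : tauc = .cofinite := by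
  refine le_antisymm (@le_cofinite_of_t1Space _ tauc t1Space_tauc) (le_generateFrom ?_)
  rintro _ ⟨x, n, rfl⟩ -
  exact finite_compl_Wc n x

end Tauc

/-- Proposition 3: `τ_c` is a compact `T₁` topology on `C(p,q)` for which all left and
right translations and the inversion are continuous. -/
theorem stmt7 :
    @CompactSpace (ℕ × ℕ) tauc ∧
    @T1Space (ℕ × ℕ) tauc ∧
    (∀ a : ℕ × ℕ, @Continuous (ℕ × ℕ) (ℕ × ℕ) tauc tauc (fun x => bmul a x)) ∧
    (∀ a : ℕ × ℕ, @Continuous (ℕ × ℕ) (ℕ × ℕ) tauc tauc (fun x => bmul x a)) ∧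
    @Continuous (ℕ × ℕ) (ℕ × ℕ) tauc tauc binv := by
  rw [tauc_eq_cofinite]
  exact ⟨compactSpace_cofinite, tauc_eq_cofinite ▸ t1Space_tauc,
    fun a => continuous_cofinite_of_tendsto (tendsto_bmul_left_cofinite a),
    fun a => continuous_cofinite_of_tendsto (tendsto_bmul_right_cofinite a),
    continuous_cofinite_of_tendsto binv_injective.tendsto_cofinite⟩
end

section
/- Every shift-continuous Baire T₁ topology τ on the bicyclic monoid C(p,q) is discrete; that is, if τ is a T₁ topology on C(p,q) such that (C(p,q), τ) is a Baire space and all left and right translations x ↦ a·x and x ↦ x·a are continuous, then τ is the discrete topology. -/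
/-!
A countable `T₁` Baire space has an isolated point `y`. The bicyclic monoid is simple: every `x`
satisfies `a * x * b = y` for suitable `a` and `b`. Translations have finite fibers, so continuity
of `x ↦ a * x * b` gives `x` a finite open neighborhood, and in a `T₁` space `x` is then isolated.
-/

section Topology

variable {X Y : Type*} [TopologicalSpace X] [TopologicalSpace Y] [T1Space X]

theorem exists_isOpen_singleton_of_countable_of_baireSpace [Countable X] [Nonempty X]
    [BaireSpace X] : ∃ x : X, IsOpen {x} := by
  obtain ⟨x, hx⟩ := nonempty_interior_of_iUnion_of_closed
    (fun x : X => isClosed_singleton (x := x)) (Set.iUnion_of_singleton X)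
  have interior_eq : interior {x} = {x} := hx.subset_singleton_iff.mp interior_subset
  exact ⟨x, interior_eq ▸ isOpen_interior⟩

theorem isOpen_singleton_of_finite_fiber {f : X → Y} (hf : Continuous f) {x : X}
    (hfx : IsOpen {f x}) (hfin : (f ⁻¹' {f x}).Finite) : IsOpen {x} :=
  isOpen_singleton_of_finite_mem_nhds x ((hfx.preimage hf).mem_nhds rfl) hfin

end Topology

theorem finite_preimage_bmul_left (a c : ℕ × ℕ) : ((fun x => bmul a x) ⁻¹' {c}).Finite := by
  refine (Set.finite_Iic (a.2 + c.1, c.2)).subset ?_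
  rintro x rfl
  constructor <;> simp only [bmul] <;> omega

theorem finite_preimage_bmul_right (a c : ℕ × ℕ) : ((fun x => bmul x a) ⁻¹' {c}).Finite := by
  refine (Set.finite_Iic (c.1, a.1 + c.2)).subset ?_
  rintro x rfl
  constructor <;> simp only [bmul] <;> omega

theorem bmul_bmul_cancel_middle (x y : ℕ × ℕ) :
    bmul (bmul (y.1, x.1) x) (x.2, y.2) = y := by
  simp [bmul]

/-- Theorem 1: every shift-continuous Baire `T₁` topology on the bicyclic monoid is
discrete. -/
theorem stmt9 (τ : TopologicalSpace (ℕ × ℕ))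
    (hT1 : @T1Space (ℕ × ℕ) τ)
    (hBaire : @BaireSpace (ℕ × ℕ) τ)
    (hleft : ∀ a : ℕ × ℕ, @Continuous (ℕ × ℕ) (ℕ × ℕ) τ τ (fun x => bmul a x))
    (hright : ∀ a : ℕ × ℕ, @Continuous (ℕ × ℕ) (ℕ × ℕ) τ τ (fun x => bmul x a)) :
    τ = ⊥ := by
  obtain ⟨y, hy⟩ := exists_isOpen_singleton_of_countable_of_baireSpace (X := ℕ × ℕ)
  refine eq_bot_of_singletons_open fun x => ?_
  have isOpen_bmul_bmul : IsOpen {bmul (bmul (y.1, x.1) x) (x.2, y.2)} := by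
    rwa [bmul_bmul_cancel_middle]
  have isOpen_bmul : IsOpen {bmul (y.1, x.1) x} :=
    isOpen_singleton_of_finite_fiber (hright _) isOpen_bmul_bmul (finite_preimage_bmul_right _ _)
  exact isOpen_singleton_of_finite_fiber (hleft _) isOpen_bmul (finite_preimage_bmul_left _ _)
end

section
/- Let τ be an inverse semigroup T₁ topology on the bicyclic monoid C(p,q), i.e., a T₁ topology for which multiplication is jointly continuous and inversion is continuous. If there exists an idempotent q^i p^i ∈ C(p,q) such that the subspace E(C(p,q)) of idempotents is quasi-regular at q^i p^i, then τ is the discrete topology. -/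
/-- The set of idempotents `E(C(p,q)) = {q^i p^i : i ∈ ℕ}`. -/
def bE : Set (ℕ × ℕ) := {x | bmul x x = x}

lemma idem_mem (i : ℕ) : ((i, i) : ℕ × ℕ) ∈ bE := by
  simp [bE, bmul]

/-- The subspace topology on a subset `Y` of the bicyclic monoid. -/
def subT (τ : TopologicalSpace (ℕ × ℕ)) (Y : Set (ℕ × ℕ)) : TopologicalSpace Y :=
  TopologicalSpace.induced Subtype.val τ

/-- A space is quasi-regular at a point `x` if every open neighbourhood `U` of `x`
contains the closure of some nonempty open set. -/
def QuasiRegularAt {X : Type*} (t : TopologicalSpace X) (x : X) : Prop :=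
  ∀ U : Set X, @IsOpen X t U → x ∈ U →
    ∃ V : Set X, V.Nonempty ∧ @IsOpen X t V ∧ @closure X t V ⊆ U

/-!
Inside `E(C(p,q))`, a copy of `ℕ` whose multiplication is `max`, suppose no point is isolated.
Then nonempty open sets are infinite, so by continuity of `max` the closure of an open set
contains every point above one of its elements. Quasi-regularity at `i` therefore makes every
neighbourhood of `i` contain a tail, and, again by continuity of `max`, every neighbourhood of any
`j ≥ i` contain a tail as well. Such a `j` lies in the closure of every nonempty open set; for
`j > i` this contradicts quasi-regularity at `i`, applied to the neighbourhood `{j}ᶜ`. So some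
idempotent is isolated; conjugations carry this over to all idempotents, and
`x ↦ (x * x⁻¹, x⁻¹ * x)` embeds `C(p,q)` into the square of the then discrete space `E(C(p,q))`.
-/

open Set Filter Topology

section LinearOrder

variable {α : Type*} [t : TopologicalSpace α] [LinearOrder α]

theorem atTop_le_nhds_of_le {a b : α} (hmax : Continuous fun x => max x b)
    (ha : atTop ≤ 𝓝 a) (hab : a ≤ b) : atTop ≤ 𝓝 b := by
  have hlim : Tendsto (fun x => max x b) atTop (𝓝 b) := by
    simpa only [max_eq_right hab] using (hmax.tendsto a).mono_left ha
  have heq : (fun x => max x b) =ᶠ[atTop] id := by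
    filter_upwards [eventually_ge_atTop b] with x hx using max_eq_left hx
  exact hlim.congr' heq

variable [T1Space α]

theorem clusterPt_atTop_of_finite_Iic (hfin : ∀ b : α, (Iic b).Finite) (a : α)
    [(𝓝[≠] a).NeBot] : ClusterPt a atTop := by
  have : Nonempty α := ⟨a⟩
  refine clusterPt_iff_frequently.2 fun V hV => frequently_atTop.2 fun b => ?_
  obtain ⟨x, hxV, hxb⟩ := (infinite_of_mem_nhds a hV).exists_notMem_finite (hfin b)
  exact ⟨x, (not_le.1 hxb).le, hxV⟩

theorem mem_closure_of_mem_nhds_of_le (hfin : ∀ b : α, (Iic b).Finite) {a b : α}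
    [(𝓝[≠] a).NeBot] (hmax : Continuous fun x => max x b) {V : Set α} (hV : V ∈ 𝓝 a)
    (hab : a ≤ b) : b ∈ closure V := by
  refine mem_closure_iff_nhds.2 fun U hU => ?_
  have hU' : ∀ᶠ x in 𝓝 a, max x b ∈ U :=
    hmax.continuousAt.eventually_mem (by rwa [max_eq_right hab])
  have hfreq : ∃ᶠ x in atTop, max x b ∈ U ∧ x ∈ V :=
    (clusterPt_atTop_of_finite_Iic hfin a).frequently (hU'.and hV)
  obtain ⟨x, ⟨hxU, hxV⟩, hbx⟩ := (hfreq.and_eventually (eventually_ge_atTop b)).exists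
  exact ⟨x, by rwa [max_eq_left hbx] at hxU, hxV⟩

theorem atTop_le_nhds_of_quasiRegularAt [PerfectSpace α] (hfin : ∀ b : α, (Iic b).Finite)
    (hmax : ∀ b : α, Continuous fun x => max x b) {i : α} (hi : QuasiRegularAt t i) :
    atTop ≤ 𝓝 i := by
  refine (nhds_basis_opens i).ge_iff.2 fun U ⟨hiU, hU⟩ => ?_
  obtain ⟨V, ⟨a, haV⟩, hV, hVU⟩ := hi U hU hiU
  filter_upwards [Ici_mem_atTop a] with b hab
  exact hVU (mem_closure_of_mem_nhds_of_le hfin (hmax b) (hV.mem_nhds haV) hab)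

theorem not_quasiRegularAt_of_perfectSpace [PerfectSpace α] (hfin : ∀ b : α, (Iic b).Finite)
    (hmax : ∀ b : α, Continuous fun x => max x b) (i : α) : ¬ QuasiRegularAt t i := by
  intro hi
  obtain ⟨j, -, hij⟩ : ∃ j ∈ univ, j ∉ Iic i :=
    (infinite_of_mem_nhds i univ_mem).exists_notMem_finite (hfin i)
  replace hij : i < j := not_le.1 hij
  obtain ⟨V, ⟨a, haV⟩, hV, hVj⟩ := hi {j}ᶜ isOpen_compl_singleton hij.ne
  have hj : atTop ≤ 𝓝 j :=
    atTop_le_nhds_of_le (hmax j) (atTop_le_nhds_of_quasiRegularAt hfin hmax hi) hij.le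
  have hVfreq : ∃ᶠ x in atTop, x ∈ V :=
    (clusterPt_atTop_of_finite_Iic hfin a).frequently (hV.mem_nhds haV)
  exact hVj (mem_closure_iff_frequently.2 (hVfreq.filter_mono hj)) rfl

theorem exists_isOpen_singleton_of_quasiRegularAt (hfin : ∀ b : α, (Iic b).Finite)
    (hmax : ∀ b : α, Continuous fun x => max x b) {i : α} (hi : QuasiRegularAt t i) :
    ∃ a : α, IsOpen {a} := by
  by_contra! hopen
  have : PerfectSpace α := perfectSpace_iff_forall_not_isolated.2 fun x =>
    ⟨mt (isOpen_singleton_iff_punctured_nhds x).2 (hopen x)⟩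
  exact not_quasiRegularAt_of_perfectSpace hfin hmax i hi

end LinearOrder

/-- The bicyclic monoid as a type of its own, carrying `bmul` and `binv` as `*` and `⁻¹`, and
without the product order and product topology of `ℕ × ℕ`. -/
def Bicyclic : Type := ℕ × ℕ

namespace Bicyclic

instance : Mul Bicyclic := ⟨bmul⟩

instance : Inv Bicyclic := ⟨binv⟩

/-- The set `bE` of idempotents, seen in `Bicyclic`. -/
def idempotents : Set Bicyclic := bE

theorem mem_idempotents_iff {x : Bicyclic} : x ∈ idempotents ↔ x.1 = x.2 := by
  change bmul x x = x ↔ x.1 = x.2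
  obtain ⟨k, l⟩ := x
  simp only [bmul, Prod.mk.injEq]
  omega

/-- The exponent `n` of the idempotent `q^n p^n`. -/
def exponent (e : idempotents) : ℕ := e.1.1

theorem coe_eq_exponent (e : idempotents) : (e : Bicyclic) = (exponent e, exponent e) :=
  Prod.ext rfl (mem_idempotents_iff.1 e.2).symm

theorem exponent_injective : Function.Injective exponent := fun e f h =>
  Subtype.ext <| by rw [coe_eq_exponent e, coe_eq_exponent f, h]

/-- Idempotents are ordered by exponent, the reverse of the natural partial order of the inverse
semigroup `C(p,q)`, so that they form a copy of `ℕ`. -/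
instance : LinearOrder idempotents := LinearOrder.lift' exponent exponent_injective

theorem exponent_max (e f : idempotents) : exponent (max e f) = max (exponent e) (exponent f) :=
  Monotone.map_max fun _ _ => id

theorem finite_Iic_idempotents (e : idempotents) : (Iic e).Finite :=
  (finite_Iic (exponent e)).preimage exponent_injective.injOn

theorem coe_max (e f : idempotents) : (max e f : idempotents) = (e * f : Bicyclic) := by
  rw [coe_eq_exponent, exponent_max, coe_eq_exponent e, coe_eq_exponent f]
  change _ = bmul _ _
  simp only [bmul, Prod.mk.injEq]
  omega

theorem conj_eq (x : Bicyclic) (e : idempotents) :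
    x * e * x⁻¹ = (x.1 + (exponent e - x.2), x.1 + (exponent e - x.2)) := by
  rw [coe_eq_exponent]
  change bmul (bmul _ _) (binv x) = _
  simp only [bmul, binv, Prod.mk.injEq]
  omega

/-- Conjugation `e ↦ x e x⁻¹` as a self-map of the idempotents. -/
def conj (x : Bicyclic) (e : idempotents) : idempotents :=
  ⟨x * e * x⁻¹, mem_idempotents_iff.2 (by rw [conj_eq])⟩

theorem exponent_conj (x : Bicyclic) (e : idempotents) :
    exponent (conj x e) = x.1 + (exponent e - x.2) :=
  congrArg Prod.fst (conj_eq x e)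

theorem mul_inv_eq (x : Bicyclic) : x * x⁻¹ = (x.1, x.1) := by
  change bmul x (binv x) = _
  simp [bmul, binv]

theorem inv_mul_eq (x : Bicyclic) : x⁻¹ * x = (x.2, x.2) := by
  change bmul (binv x) x = _
  simp [bmul, binv]

section Topology

variable [TopologicalSpace Bicyclic] [ContinuousMul Bicyclic]

theorem continuous_max_const (f : idempotents) : Continuous fun e => max e f := by
  refine continuous_induced_rng.2 ?_
  simp only [Function.comp_def, coe_max]
  fun_prop

theorem continuous_conj (x : Bicyclic) : Continuous (conj x) := by
  unfold conj
  fun_prop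

theorem discreteTopology_idempotents_of_isOpen_singleton [T1Space Bicyclic] {a : idempotents}
    (ha : IsOpen {a}) : DiscreteTopology idempotents := by
  refine discreteTopology_iff_isOpen_singleton.2 fun e => ?_
  -- Conjugation by `q^a p^e` sends exactly the idempotents of exponent at most `e` to `a`.
  let c : idempotents → idempotents := conj (exponent a, exponent e)
  have exponent_c (f : idempotents) : exponent (c f) = exponent a + (exponent f - exponent e) :=
    exponent_conj _ f
  have hce : c e = a := exponent_injective (by rw [exponent_c, Nat.sub_self, Nat.add_zero])
  have hnhds : c ⁻¹' {a} ∈ 𝓝 e := (ha.preimage (continuous_conj _)).mem_nhds hce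
  have hfibre : c ⁻¹' {a} ⊆ Iic e := fun f hf => by
    have hcf : exponent (c f) = exponent a := congrArg exponent hf
    rw [exponent_c] at hcf
    exact Nat.sub_eq_zero_iff_le.1 (Nat.add_eq_left.1 hcf)
  exact isOpen_singleton_of_finite_mem_nhds e hnhds ((finite_Iic_idempotents e).subset hfibre)

theorem discreteTopology_of_idempotents [ContinuousInv Bicyclic]
    [DiscreteTopology idempotents] : DiscreteTopology Bicyclic := by
  let f (x : Bicyclic) : idempotents × idempotents :=
    (⟨x * x⁻¹, mem_idempotents_iff.2 (by rw [mul_inv_eq])⟩,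
      ⟨x⁻¹ * x, mem_idempotents_iff.2 (by rw [inv_mul_eq])⟩)
  have hf : Continuous f := by fun_prop
  refine .of_continuous_injective hf fun x y hxy => ?_
  have hfst : x * x⁻¹ = y * y⁻¹ := congrArg (fun p => (p.1 : Bicyclic)) hxy
  have hsnd : x⁻¹ * x = y⁻¹ * y := congrArg (fun p => (p.2 : Bicyclic)) hxy
  rw [mul_inv_eq, mul_inv_eq] at hfst
  rw [inv_mul_eq, inv_mul_eq] at hsnd
  exact Prod.ext (Prod.mk.inj hfst).1 (Prod.mk.inj hsnd).1

end Topology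

end Bicyclic

/-- Proposition 4: let `τ` be an inverse semigroup `T₁` topology on `C(p,q)` (i.e. the
multiplication is jointly continuous and the inversion is continuous). If the subspace of
idempotents `E(C(p,q))` is quasi-regular at some idempotent `q^i p^i`, then `τ` is
discrete. -/
theorem stmt13 (τ : TopologicalSpace (ℕ × ℕ))
    (hT1 : @T1Space (ℕ × ℕ) τ)
    (hmul : @Continuous ((ℕ × ℕ) × (ℕ × ℕ)) (ℕ × ℕ)
      (@instTopologicalSpaceProd (ℕ × ℕ) (ℕ × ℕ) τ τ) τ (fun p => bmul p.1 p.2))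
    (hinv : @Continuous (ℕ × ℕ) (ℕ × ℕ) τ τ binv)
    (i : ℕ)
    (hqr : QuasiRegularAt (subT τ bE) ⟨(i, i), idem_mem i⟩) :
    τ = ⊥ := by
  let _ : TopologicalSpace Bicyclic := τ
  have : T1Space Bicyclic := hT1
  have : ContinuousMul Bicyclic := ⟨hmul⟩
  have : ContinuousInv Bicyclic := ⟨hinv⟩
  obtain ⟨a, ha⟩ : ∃ a : Bicyclic.idempotents, IsOpen {a} :=
    exists_isOpen_singleton_of_quasiRegularAt Bicyclic.finite_Iic_idempotents
      Bicyclic.continuous_max_const hqr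
  have : DiscreteTopology Bicyclic.idempotents :=
    Bicyclic.discreteTopology_idempotents_of_isOpen_singleton ha
  exact Bicyclic.discreteTopology_of_idempotents.eq_bot
end

section
/- Let τ be a shift-continuous T₁ topology on the bicyclic monoid C(p,q) such that the maps C(p,q) → E(C(p,q)), x ↦ x·x^{-1} and x ↦ x^{-1}·x are continuous. If there exists an idempotent q^i p^i ∈ C(p,q) such that the subspace E(C(p,q)) of idempotents is semiregular at q^i p^i, then τ is the discrete topology. -/
lemma bmul_binv_mem (x : ℕ × ℕ) : bmul x (binv x) ∈ bE := by
  obtain ⟨k, l⟩ := x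
  simp [bE, bmul, binv]

lemma binv_bmul_mem (x : ℕ × ℕ) : bmul (binv x) x ∈ bE := by
  obtain ⟨k, l⟩ := x
  simp [bE, bmul, binv]

/-- A space is semiregular at a point `x` if there is a neighbourhood basis at `x`
consisting of regular open sets, i.e. sets `U` with `U = int(cl(U))`. -/
def SemiregularAt {X : Type*} (t : TopologicalSpace X) (x : X) : Prop :=
  ∃ B : Set (Set X),
    (∀ U ∈ B, U = @interior X t (@closure X t U)) ∧
    (∀ U ∈ B, x ∈ U) ∧
    (∀ S : Set X, @IsOpen X t S → x ∈ S → ∃ U ∈ B, U ⊆ S)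

/-!
On idempotents, `q^i p^i · q^j p^j = q^k p^k` with `k = max i j`, so right translation by `q^j p^j`
moves only finitely many idempotents. In a `T₁` space a continuous map that moves only finitely many
points has the property that a non-isolated point `a` cannot be separated from its image. Hence, if
`E(C(p,q))` had no isolated point, all of its nonempty open sets would meet, and its only nonempty
regular open set would be the whole space, against semiregularity at `q^i p^i`.

So some idempotent is isolated in `E(C(p,q))`; since it is the only `x` for which both `x·x⁻¹` and
`x⁻¹·x` are equal to it, it is isolated in `C(p,q)`. Finally, each equation `a·x·b = c` with `c` the
isolated point has an open solution set, and for suitable `a`, `b` this set is finite and contains a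
prescribed element.
-/

open Filter Topology

section Separation

variable {X : Type*} [t : TopologicalSpace X] [T1Space X]

lemma nhdsNE_le_nhds_of_eventually_cofinite_eq {f : X → X} {a : X} (hf : ContinuousAt f a)
    (hfix : ∀ᶠ x in cofinite, f x = x) : 𝓝[≠] a ≤ 𝓝 (f a) := by
  have hfix' : f =ᶠ[𝓝[≠] a] id := nhdsNE_le_cofinite a hfix
  exact tendsto_id'.mp ((hf.tendsto.mono_left nhdsWithin_le_nhds).congr' hfix')

lemma inter_nonempty_of_eventually_cofinite_eq {f : X → X} {a : X} (hf : ContinuousAt f a)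
    (hfix : ∀ᶠ x in cofinite, f x = x) (ha : ¬ IsOpen {a}) {V W : Set X}
    (hV : V ∈ 𝓝 a) (hW : W ∈ 𝓝 (f a)) : (V ∩ W).Nonempty := by
  have : (𝓝[≠] a).NeBot := by rwa [neBot_iff, ne_eq, ← isOpen_singleton_iff_punctured_nhds]
  exact nonempty_of_mem <| inter_mem (mem_nhdsWithin_of_mem_nhds hV)
    (nhdsNE_le_nhds_of_eventually_cofinite_eq hf hfix hW)

lemma preirreducibleSpace_of_eventually_cofinite_eq (hX : ∀ x : X, ¬ IsOpen {x})
    {op : X → X → X} (hop : ∀ b, Continuous fun x => op x b)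
    (hfix : ∀ b, ∀ᶠ x in cofinite, op x b = x) (htotal : ∀ a b, op a b = b ∨ op b a = a) :
    PreirreducibleSpace X := by
  refine ⟨fun V W hV hW ⟨a, _, ha⟩ ⟨b, _, hb⟩ => ?_⟩
  rw [Set.univ_inter]
  rcases htotal a b with hab | hba
  · exact inter_nonempty_of_eventually_cofinite_eq (hop b).continuousAt (hfix b) (hX a)
      (hV.mem_nhds ha) (hW.mem_nhds (hab.symm ▸ hb))
  · rw [Set.inter_comm]
    exact inter_nonempty_of_eventually_cofinite_eq (hop a).continuousAt (hfix a) (hX b)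
      (hW.mem_nhds hb) (hV.mem_nhds (hba.symm ▸ ha))

lemma SemiregularAt.subsingleton [PreirreducibleSpace X] {x : X} (hx : SemiregularAt t x) :
    Subsingleton X := by
  obtain ⟨B, hregular, hmem, hbasis⟩ := hx
  refine subsingleton_of_forall_eq x fun y => ?_
  by_contra hyx
  obtain ⟨U, hUB, hUy⟩ := hbasis {y}ᶜ isOpen_compl_singleton (Ne.symm hyx)
  have hUopen : IsOpen U := hregular U hUB ▸ isOpen_interior
  have hUdense : Dense U := hUopen.dense ⟨x, hmem U hUB⟩
  have hUuniv : U = Set.univ := by rw [hregular U hUB, hUdense.closure_eq, interior_univ]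
  exact hUy (hUuniv ▸ Set.mem_univ y) rfl

end Separation

section Idempotents

lemma mem_bE_iff {x : ℕ × ℕ} : x ∈ bE ↔ ∃ i, x = (i, i) := by
  obtain ⟨k, l⟩ := x
  simp only [bE, bmul, Set.mem_ofPred_eq, Prod.mk.injEq, exists_eq_left']
  omega

lemma bmul_idem_idem (i j : ℕ) : bmul (i, i) (j, j) = (max i j, max i j) := by
  simp only [bmul, Prod.mk.injEq]
  omega

lemma bmul_mem_bE {x y : ℕ × ℕ} (hx : x ∈ bE) (hy : y ∈ bE) : bmul x y ∈ bE := by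
  obtain ⟨i, rfl⟩ := mem_bE_iff.mp hx
  obtain ⟨j, rfl⟩ := mem_bE_iff.mp hy
  exact bmul_idem_idem i j ▸ idem_mem _

lemma bmul_eq_right_total {x y : ℕ × ℕ} (hx : x ∈ bE) (hy : y ∈ bE) :
    bmul x y = y ∨ bmul y x = x := by
  obtain ⟨i, rfl⟩ := mem_bE_iff.mp hx
  obtain ⟨j, rfl⟩ := mem_bE_iff.mp hy
  rcases le_total i j with hij | hji
  · exact .inl (by rw [bmul_idem_idem, max_eq_right hij])
  · exact .inr (by rw [bmul_idem_idem, max_eq_right hji])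

lemma eventually_cofinite_bmul_eq_left {y : ℕ × ℕ} (hy : y ∈ bE) :
    ∀ᶠ x : bE in cofinite, bmul x y = x := by
  refine ((Set.finite_Iic y).preimage Subtype.val_injective.injOn).subset ?_
  rintro ⟨x, hx⟩ (hxy : bmul x y ≠ x)
  obtain ⟨i, rfl⟩ := mem_bE_iff.mp hx
  obtain ⟨j, rfl⟩ := mem_bE_iff.mp hy
  have hij : i ≤ j := by
    by_contra! hji
    exact hxy (by rw [bmul_idem_idem, max_eq_left hji.le])
  exact Prod.mk_le_mk.mpr ⟨hij, hij⟩

lemma eq_idem_iff_bmul_binv_and_binv_bmul {x : ℕ × ℕ} {i : ℕ} :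
    x = (i, i) ↔ bmul x (binv x) = (i, i) ∧ bmul (binv x) x = (i, i) := by
  obtain ⟨k, l⟩ := x
  simp [bmul, binv]

end Idempotents

section ShiftContinuous

variable [TopologicalSpace (ℕ × ℕ)]

lemma preirreducibleSpace_bE_of_not_isOpen_singleton [T1Space (ℕ × ℕ)]
    (hright : ∀ a : ℕ × ℕ, Continuous fun x => bmul x a) (hE : ∀ e : bE, ¬ IsOpen {e}) :
    PreirreducibleSpace bE := by
  refine preirreducibleSpace_of_eventually_cofinite_eq hE
    (op := fun x y => ⟨bmul x y, bmul_mem_bE x.2 y.2⟩) (fun y => ?_) (fun y => ?_) (fun x y => ?_)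
  · exact ((hright y).comp continuous_subtype_val).subtype_mk _
  · simpa only [Subtype.ext_iff] using eventually_cofinite_bmul_eq_left y.2
  · simpa only [Subtype.ext_iff] using bmul_eq_right_total x.2 y.2

lemma exists_isOpen_singleton_of_semiregularAt [T1Space (ℕ × ℕ)]
    (hright : ∀ a : ℕ × ℕ, Continuous fun x => bmul x a) {e : bE}
    (he : SemiregularAt instTopologicalSpaceSubtype e) : ∃ f : bE, IsOpen {f} := by
  by_contra! hE
  have : PreirreducibleSpace bE := preirreducibleSpace_bE_of_not_isOpen_singleton hright hE
  have : Subsingleton bE := he.subsingleton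
  have h01 : (⟨(0, 0), idem_mem 0⟩ : bE) = ⟨(1, 1), idem_mem 1⟩ := Subsingleton.elim _ _
  simp at h01

lemma isOpen_singleton_coe_bE
    (hmi : Continuous fun x => (⟨bmul x (binv x), bmul_binv_mem x⟩ : bE))
    (him : Continuous fun x => (⟨bmul (binv x) x, binv_bmul_mem x⟩ : bE))
    {e : bE} (he : IsOpen {e}) : IsOpen {(e : ℕ × ℕ)} := by
  obtain ⟨e, hmem⟩ := e
  obtain ⟨i, rfl⟩ := mem_bE_iff.mp hmem
  convert (he.preimage hmi).inter (he.preimage him) using 1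
  ext x
  simpa [Subtype.ext_iff] using eq_idem_iff_bmul_binv_and_binv_bmul

lemma discreteTopology_of_isOpen_singleton [T1Space (ℕ × ℕ)]
    (hleft : ∀ a : ℕ × ℕ, Continuous fun x => bmul a x)
    (hright : ∀ a : ℕ × ℕ, Continuous fun x => bmul x a)
    {c : ℕ × ℕ} (hc : IsOpen {c}) : DiscreteTopology (ℕ × ℕ) := by
  refine discreteTopology_iff_isOpen_singleton.mpr fun x => ?_
  have hopen : IsOpen {y | bmul (bmul (c.1, x.1) y) (x.2, c.2) = c} :=
    hc.preimage ((hright _).comp (hleft _))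
  have hx : bmul (bmul (c.1, x.1) x) (x.2, c.2) = c := by simp [bmul]
  have hle : {y | bmul (bmul (c.1, x.1) y) (x.2, c.2) = c} ⊆ Set.Iic x := by
    intro y hy
    simp only [bmul, Set.mem_ofPred_eq, Prod.ext_iff] at hy
    exact Prod.le_def.mpr (by omega)
  exact isOpen_singleton_of_finite_mem_nhds x (hopen.mem_nhds hx) ((Set.finite_Iic x).subset hle)

end ShiftContinuous

/-- Proposition 5: let `τ` be a shift-continuous `T₁` topology on `C(p,q)` such that the
maps `x ↦ x·x⁻¹` and `x ↦ x⁻¹·x` into `E(C(p,q))` are continuous. If the subspace of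
idempotents `E(C(p,q))` is semiregular at some idempotent `q^i p^i`, then `τ` is
discrete. -/
theorem stmt16 (τ : TopologicalSpace (ℕ × ℕ))
    (hT1 : @T1Space (ℕ × ℕ) τ)
    (hleft : ∀ a : ℕ × ℕ, @Continuous (ℕ × ℕ) (ℕ × ℕ) τ τ (fun x => bmul a x))
    (hright : ∀ a : ℕ × ℕ, @Continuous (ℕ × ℕ) (ℕ × ℕ) τ τ (fun x => bmul x a))
    (hmi : @Continuous (ℕ × ℕ) bE τ (subT τ bE)
      (fun x => ⟨bmul x (binv x), bmul_binv_mem x⟩))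
    (him : @Continuous (ℕ × ℕ) bE τ (subT τ bE)
      (fun x => ⟨bmul (binv x) x, binv_bmul_mem x⟩))
    (i : ℕ)
    (hsr : SemiregularAt (subT τ bE) ⟨(i, i), idem_mem i⟩) :
    τ = ⊥ := by
  obtain ⟨e, he⟩ := exists_isOpen_singleton_of_semiregularAt hright hsr
  have he' : IsOpen {(e : ℕ × ℕ)} := isOpen_singleton_coe_bE hmi him he
  exact (discreteTopology_of_isOpen_singleton hleft hright he').eq_bot
end

section
/- Let τ be a shift-continuous T₁ topology on the bicyclic monoid C(p,q) such that the maps C(p,q) → E(C(p,q)), x ↦ x·x^{-1} and x ↦ x^{-1}·x are continuous. If there exists a point q^i p^j ∈ C(p,q) such that the subspace ↓≼ q^i p^j is semiregular at q^i p^j, then τ is the discrete topology. -/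
lemma self_mem_bDown (i j : ℕ) : ((i, j) : ℕ × ℕ) ∈ bDown (i, j) :=
  ⟨(j, j), by simp [bmul], by simp [bmul]⟩

/-!
In `↓≼ q^i p^j = {q^(i+n) p^(j+n)}`, right translation by the idempotent `q^(j+n) p^(j+n)` moves the
top point to the `n`-th one and fixes all but finitely many points. So if the top point were not
isolated, each of its neighbourhoods would be dense, and a dense regular open set is the whole
space, contradicting semiregularity and `T₁`. The map `x ↦ q^i p^n · x · q^n p^j`
sends `q^n p^n` to the top point, whose preimage in `E(C(p,q))` is finite; hence `E(C(p,q))` is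
discrete, and continuity of `x ↦ x·x⁻¹` makes every row `{q^k p^l : l ∈ ℕ}` open. Finally `q^k p^l`
is the only point of row `k` that right translation by `q^(l+1)` sends into row `k + 1`.
-/

open Filter Topology

section Semiregular

variable {X : Type*} [t : TopologicalSpace X] [T1Space X] {x : X}

lemma dense_of_mem_nhds_of_cofinite_fixed [NeBot (𝓝[≠] x)]
    (hf : ∀ y, ∃ f : X → X, Continuous f ∧ f x = y ∧ ∀ᶠ z in cofinite, f z = z)
    {U : Set X} (hU : U ∈ 𝓝 x) : Dense U := by
  intro y
  obtain ⟨f, hfc, rfl, hfix⟩ := hf y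
  refine mem_closure_iff_nhds.2 fun W hW => ?_
  have hinf : (U ∩ f ⁻¹' W).Infinite :=
    infinite_of_mem_nhds x (inter_mem hU (hfc.continuousAt.preimage_mem_nhds hW))
  obtain ⟨z, ⟨hzU, hzW⟩, hfz⟩ :=
    ((frequently_cofinite_iff_infinite.2 hinf).and_eventually hfix).exists
  exact ⟨z, hfz ▸ hzW, hzU⟩

lemma SemiregularAt.exists_not_dense [Nontrivial X] (h : SemiregularAt t x) :
    ∃ U ∈ 𝓝 x, ¬ Dense U := by
  obtain ⟨B, hregular, hmem, hbasis⟩ := h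
  obtain ⟨y, hyx⟩ := exists_ne x
  obtain ⟨U, hUB, hUy⟩ := hbasis {y}ᶜ isOpen_compl_singleton hyx.symm
  have hU : U = interior (closure U) := hregular U hUB
  have hUo : IsOpen U := hU ▸ isOpen_interior
  refine ⟨U, hUo.mem_nhds (hmem U hUB), fun hdense => ?_⟩
  rw [hdense.closure_eq, interior_univ] at hU
  exact hUy (hU ▸ Set.mem_univ y) rfl

lemma SemiregularAt.isOpen_singleton_of_cofinite_fixed (h : SemiregularAt t x)
    (hf : ∀ y, ∃ f : X → X, Continuous f ∧ f x = y ∧ ∀ᶠ z in cofinite, f z = z) :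
    IsOpen {x} := by
  by_contra hx
  have : NeBot (𝓝[≠] x) := ⟨fun hbot => hx (isOpen_singleton_iff_punctured_nhds x |>.2 hbot)⟩
  obtain ⟨y, hyx⟩ : ({x}ᶜ : Set X).Nonempty := nonempty_of_mem (self_mem_nhdsWithin (a := x))
  have : Nontrivial X := ⟨y, x, hyx⟩
  obtain ⟨U, hU, hU_not_dense⟩ := h.exists_not_dense
  exact hU_not_dense (dense_of_mem_nhds_of_cofinite_fixed hf hU)

end Semiregular

section Algebra

lemma mk_mem_bE_iff {k l : ℕ} : (k, l) ∈ bE ↔ k = l := by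
  simp only [bE, bmul, Set.mem_ofPred_eq, Prod.mk.injEq]
  omega

lemma bmul_binv (x : ℕ × ℕ) : bmul x (binv x) = (x.1, x.1) := by
  simp [bmul, binv]

lemma bmul_diag (i j m n : ℕ) :
    bmul (i + m, j + m) (j + n, j + n) = (i + max m n, j + max m n) := by
  simp only [bmul, Prod.mk.injEq]
  omega

lemma bmul_diag_bmul (i j k n : ℕ) :
    bmul (bmul (i, n) (k, k)) (n, j) = (i + (k - n), j + (k - n)) := by
  simp only [bmul, Prod.mk.injEq]
  omega

lemma mem_bDown_iff {i j : ℕ} {y : ℕ × ℕ} :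
    y ∈ bDown (i, j) ↔ ∃ n, y = (i + n, j + n) := by
  constructor
  · rintro ⟨⟨k, l⟩, he, rfl⟩
    obtain rfl : k = l := mk_mem_bE_iff.1 he
    exact ⟨k - j, by simp only [bmul, Prod.mk.injEq, true_and]; omega⟩
  · rintro ⟨n, rfl⟩
    exact ⟨(j + n, j + n), mk_mem_bE_iff.2 rfl, by simpa using (bmul_diag i j 0 n).symm⟩

lemma mapsTo_bmul_diag_bDown (i j n : ℕ) :
    Set.MapsTo (fun x => bmul x (j + n, j + n)) (bDown (i, j)) (bDown (i, j)) := by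
  intro x hx
  obtain ⟨m, rfl⟩ := mem_bDown_iff.1 hx
  exact mem_bDown_iff.2 ⟨max m n, bmul_diag i j m n⟩

lemma mapsTo_bmul_bmul_bE_bDown (i j n : ℕ) :
    Set.MapsTo (fun x => bmul (bmul (i, n) x) (n, j)) bE (bDown (i, j)) := by
  rintro ⟨k, l⟩ hx
  obtain rfl : k = l := mk_mem_bE_iff.1 hx
  exact mem_bDown_iff.2 ⟨k - n, bmul_diag_bmul i j k n⟩

lemma singleton_eq_fst_preimage_inter (k l : ℕ) :
    ({(k, l)} : Set (ℕ × ℕ)) =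
      Prod.fst ⁻¹' {k} ∩ (fun x => bmul x (l + 1, 0)) ⁻¹' (Prod.fst ⁻¹' {k + 1}) := by
  ext ⟨a, b⟩
  simp only [bmul, Set.mem_singleton_iff, Set.mem_inter_iff, Set.mem_preimage, Prod.mk.injEq]
  omega

end Algebra

section Topology

-- This local instance takes precedence over the product topology on `ℕ × ℕ`.
variable [TopologicalSpace (ℕ × ℕ)]

lemma exists_continuous_bDown_cofinite_fixed
    (hright : ∀ a : ℕ × ℕ, Continuous fun x => bmul x a) (i j : ℕ) (y : bDown (i, j)) :
    ∃ f : bDown (i, j) → bDown (i, j),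
      Continuous f ∧ f ⟨(i, j), self_mem_bDown i j⟩ = y ∧ ∀ᶠ z in cofinite, f z = z := by
  obtain ⟨y, hy⟩ := y
  obtain ⟨n, rfl⟩ := mem_bDown_iff.1 hy
  have hmaps := mapsTo_bmul_diag_bDown i j n
  refine ⟨hmaps.restrict, (hright _).restrict hmaps, ?_, ?_⟩
  · exact Subtype.ext (by simpa using bmul_diag i j 0 n)
  · have hfin : ((fun m => (i + m, j + m)) '' Set.Iio n).Finite := (Set.finite_Iio n).image _
    refine (hfin.preimage Subtype.val_injective.injOn).subset ?_
    rintro ⟨z, hz⟩ hmoved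
    obtain ⟨m, rfl⟩ := mem_bDown_iff.1 hz
    refine ⟨m, Set.mem_Iio.2 (not_le.1 fun hnm => hmoved (Subtype.ext ?_)), rfl⟩
    simpa [max_eq_left hnm] using bmul_diag i j m n

lemma discreteTopology_bE_of_isOpen_singleton_bDown [T1Space (ℕ × ℕ)]
    (hleft : ∀ a : ℕ × ℕ, Continuous fun x => bmul a x)
    (hright : ∀ a : ℕ × ℕ, Continuous fun x => bmul x a) {i j : ℕ}
    (htop : IsOpen ({⟨(i, j), self_mem_bDown i j⟩} : Set (bDown (i, j)))) :
    DiscreteTopology bE := by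
  refine discreteTopology_iff_isOpen_singleton.2 ?_
  rintro ⟨⟨n, l⟩, hn⟩
  obtain rfl : n = l := mk_mem_bE_iff.1 hn
  have hmaps := mapsTo_bmul_bmul_bE_bDown i j n
  have hcont : Continuous hmaps.restrict :=
    ((hright (n, j)).comp (hleft (i, n))).restrict hmaps
  refine isOpen_singleton_of_finite_mem_nhds _
    ((htop.preimage hcont).mem_nhds (Subtype.ext (by simpa using bmul_diag_bmul i j n n))) ?_
  have hfin : ((fun k => (k, k)) '' Set.Iic n).Finite := (Set.finite_Iic n).image _
  refine (hfin.preimage Subtype.val_injective.injOn).subset ?_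
  rintro ⟨⟨k, l⟩, hk⟩ hfiber
  obtain rfl : k = l := mk_mem_bE_iff.1 hk
  have heq : (i + (k - n), j + (k - n)) = (i, j) :=
    (bmul_diag_bmul i j k n).symm.trans (congrArg Subtype.val hfiber)
  refine ⟨k, ?_, rfl⟩
  simp only [Prod.mk.injEq] at heq
  exact Set.mem_Iic.2 (by omega)

lemma isOpen_fst_preimage_singleton [DiscreteTopology bE]
    (hmi : Continuous fun x => (⟨bmul x (binv x), bmul_binv_mem x⟩ : bE)) (k : ℕ) :
    IsOpen (Prod.fst ⁻¹' {k} : Set (ℕ × ℕ)) := by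
  convert (isOpen_discrete {(⟨(k, k), mk_mem_bE_iff.2 rfl⟩ : bE)}).preimage hmi using 1
  ext x
  simp [bmul_binv]

lemma discreteTopology_of_isOpen_fst_preimage_singleton
    (hright : ∀ a : ℕ × ℕ, Continuous fun x => bmul x a)
    (hrow : ∀ k, IsOpen (Prod.fst ⁻¹' {k} : Set (ℕ × ℕ))) :
    DiscreteTopology (ℕ × ℕ) := by
  refine discreteTopology_iff_isOpen_singleton.2 ?_
  rintro ⟨k, l⟩
  rw [singleton_eq_fst_preimage_inter]
  exact (hrow k).inter ((hrow (k + 1)).preimage (hright (l + 1, 0)))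

end Topology

theorem stmt17_general (τ : TopologicalSpace (ℕ × ℕ))
    (hT1 : @T1Space (ℕ × ℕ) τ)
    (hleft : ∀ a : ℕ × ℕ, @Continuous (ℕ × ℕ) (ℕ × ℕ) τ τ (fun x => bmul a x))
    (hright : ∀ a : ℕ × ℕ, @Continuous (ℕ × ℕ) (ℕ × ℕ) τ τ (fun x => bmul x a))
    (hmi : @Continuous (ℕ × ℕ) bE τ (subT τ bE)
      (fun x => ⟨bmul x (binv x), bmul_binv_mem x⟩))
    (i j : ℕ)
    (hsr : SemiregularAt (subT τ (bDown (i, j))) ⟨(i, j), self_mem_bDown i j⟩) :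
    τ = ⊥ := by
  have htop : IsOpen ({⟨(i, j), self_mem_bDown i j⟩} : Set (bDown (i, j))) :=
    SemiregularAt.isOpen_singleton_of_cofinite_fixed hsr
      (exists_continuous_bDown_cofinite_fixed hright i j)
  have hE : DiscreteTopology bE :=
    discreteTopology_bE_of_isOpen_singleton_bDown hleft hright htop
  have hrow : ∀ k, IsOpen (Prod.fst ⁻¹' {k} : Set (ℕ × ℕ)) := isOpen_fst_preimage_singleton hmi
  exact (discreteTopology_of_isOpen_fst_preimage_singleton hright hrow).eq_bot

/-- Theorem 3: let `τ` be a shift-continuous `T₁` topology on `C(p,q)` such that the maps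
`x ↦ x·x⁻¹` and `x ↦ x⁻¹·x` into `E(C(p,q))` are continuous. If the subspace `↓≼ q^i p^j`
is semiregular at `q^i p^j` for some point `q^i p^j`, then `τ` is discrete. -/
theorem stmt17 (τ : TopologicalSpace (ℕ × ℕ))
    (hT1 : @T1Space (ℕ × ℕ) τ)
    (hleft : ∀ a : ℕ × ℕ, @Continuous (ℕ × ℕ) (ℕ × ℕ) τ τ (fun x => bmul a x))
    (hright : ∀ a : ℕ × ℕ, @Continuous (ℕ × ℕ) (ℕ × ℕ) τ τ (fun x => bmul x a))
    (hmi : @Continuous (ℕ × ℕ) bE τ (subT τ bE)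
      (fun x => ⟨bmul x (binv x), bmul_binv_mem x⟩))
    (him : @Continuous (ℕ × ℕ) bE τ (subT τ bE)
      (fun x => ⟨bmul (binv x) x, binv_bmul_mem x⟩))
    (i j : ℕ)
    (hsr : SemiregularAt (subT τ (bDown (i, j))) ⟨(i, j), self_mem_bDown i j⟩) :
    τ = ⊥ :=
  stmt17_general τ hT1 hleft hright hmi i j hsr
end
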